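/- Let m₀, α₂, σ₂, q₂ ∈ ℝ and γ₂ > 0, and define g : [0,∞) × ℝ → ℝ by g(t, θ) := exp( −θ m₀ e^{−γ₂ t} − q₂ t − (α₂/γ₂)(θ − θ e^{−γ₂ t}) + (σ₂²/(4γ₂))(θ² − θ² e^{−2γ₂ t}) ). Then g satisfies the partial differential equation ∂g/∂t (t, θ) + θ γ₂ · ∂g/∂θ (t, θ) = ( −q₂ − θ α₂ + (1/2) θ² σ₂² ) g(t, θ) for all t ≥ 0 and θ ∈ ℝ, together with the initial condition g(0, θ) = e^{−θ m₀}. -/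

import Mathlib

/-!
Write `g = exp A`. Then `∂g/∂t + θγ₂ ∂g/∂θ = (∂A/∂t + θγ₂ ∂A/∂θ) g`. The exponent `A` is a combination
of `θ e^{-γ₂t}` and `θ² e^{-2γ₂t}`, which are annihilated by the transport operator `∂ₜ + θγ₂ ∂_θ`
(they are constant along the characteristics `θ(t) = θ₀ e^{γ₂t}`), and of `t`, `θ` and `θ²`, on which
the operator gives `1`, `γ₂ θ` and `2γ₂ θ²`. These last terms produce the right-hand side.
-/

/-- The function
`g(t, θ) = exp(−θ m₀ e^{−γ₂t} − q₂t − (α₂/γ₂)(θ − θe^{−γ₂t}) + (σ₂²/(4γ₂))(θ² − θ²e^{−2γ₂t}))`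
satisfies `∂g/∂t + θγ₂ ∂g/∂θ = (−q₂ − θα₂ + θ²σ₂²/2) g` for all `t ≥ 0`, `θ ∈ ℝ`, with
`g(0, θ) = e^{−θ m₀}`. -/
theorem stmt16 (m₀ α₂ σ₂ q₂ : ℝ) (γ₂ : ℝ) (hγ₂ : 0 < γ₂)
    (g : ℝ → ℝ → ℝ)
    (hg : ∀ t θ : ℝ, g t θ =
      Real.exp (-θ * m₀ * Real.exp (-γ₂ * t) - q₂ * t
        - (α₂ / γ₂) * (θ - θ * Real.exp (-γ₂ * t))
        + (σ₂ ^ 2 / (4 * γ₂)) * (θ ^ 2 - θ ^ 2 * Real.exp (-2 * γ₂ * t)))) :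
    (∀ t θ : ℝ, 0 ≤ t →
      deriv (fun t' => g t' θ) t + θ * γ₂ * deriv (fun θ' => g t θ') θ
        = (-q₂ - θ * α₂ + (1 / 2) * θ ^ 2 * σ₂ ^ 2) * g t θ) ∧
    ∀ θ : ℝ, g 0 θ = Real.exp (-θ * m₀) := by
  have expLin (c t : ℝ) : HasDerivAt (fun s => Real.exp (c * s)) (Real.exp (c * t) * c) t := by
    simpa using ((hasDerivAt_id t).const_mul c).exp
  refine ⟨fun t θ _ => ?_, fun θ => by simp [hg]⟩
  have ht : HasDerivAt (fun t' => g t' θ)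
      (g t θ * (-θ * m₀ * (Real.exp (-γ₂ * t) * -γ₂) - q₂
        - (α₂ / γ₂) * -(θ * (Real.exp (-γ₂ * t) * -γ₂))
        + (σ₂ ^ 2 / (4 * γ₂)) * -(θ ^ 2 * (Real.exp (-2 * γ₂ * t) * (-2 * γ₂))))) t := by
    simp only [hg]
    have hlin : HasDerivAt (fun s : ℝ => q₂ * s) q₂ t := by
      simpa using (hasDerivAt_id t).const_mul q₂
    exact (((((expLin (-γ₂) t).const_mul (-θ * m₀)).sub hlin).sub
      ((((expLin (-γ₂) t).const_mul θ).const_sub θ).const_mul (α₂ / γ₂))).add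
      ((((expLin (-2 * γ₂) t).const_mul (θ ^ 2)).const_sub (θ ^ 2)).const_mul
        (σ₂ ^ 2 / (4 * γ₂)))).exp
  have hθ : HasDerivAt (fun θ' => g t θ')
      (g t θ * (-1 * m₀ * Real.exp (-γ₂ * t)
        - (α₂ / γ₂) * (1 - 1 * Real.exp (-γ₂ * t))
        + (σ₂ ^ 2 / (4 * γ₂)) * (2 * θ - 2 * θ * Real.exp (-2 * γ₂ * t)))) θ := by
    simp only [hg]
    have hid := hasDerivAt_id' θ
    have hsq : HasDerivAt (fun s : ℝ => s ^ 2) (2 * θ) θ := by simpa using hasDerivAt_pow 2 θ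
    exact (((((hid.neg.mul_const m₀).mul_const (Real.exp (-γ₂ * t))).sub_const (q₂ * t)).sub
      ((hid.sub (hid.mul_const (Real.exp (-γ₂ * t)))).const_mul (α₂ / γ₂))).add
      ((hsq.sub (hsq.mul_const (Real.exp (-2 * γ₂ * t)))).const_mul
        (σ₂ ^ 2 / (4 * γ₂)))).exp
  rw [ht.deriv, hθ.deriv]
  field_simp
  ring
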